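/- Let (S,T) be a finite directed graph that is strongly connected (for all s, s' ∈ S there is a finite run from s to s'), let c : S → ℝ be vertex costs with c(s) ≥ 0 for all s, and let M ⊆ S be a nonempty set of surveillance states. For u, u' ∈ M define D(u, u') ∈ [0,∞] as the infimum over all finite runs u = v₀, v₁, …, v_{n+1} = u' (n ≥ 0) with v₁, …, v_n ∉ M of Σ_{j=0}^{n} c(v_j). Then the minimum over all cycles of (S,T) visiting M of the per-surveillance-cycle ratio equals the minimum over all m ≥ 0 and all sequences u₀, …, u_m ∈ M with D(u_i, u_{(i+1) mod (m+1)}) < ∞ for all i of (1/(m+1)) Σ_{i=0}^{m} D(u_i, u_{(i+1) mod (m+1)}). -/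

import Mathlib

open ENNReal

/-- A cycle `c₀, …, c_m` of the graph `(S, T)`. -/
def IsCycle {S : Type*} (T : S → S → Prop) (m : ℕ) (c : ℕ → S) : Prop :=
  (∀ i < m, T (c i) (c (i + 1))) ∧ T (c m) (c 0)

/-- The per-surveillance-cycle ratio of the cycle `σ₀, …, σ_m`. -/
noncomputable def psRatio {S : Type*} (c : S → ℝ) (M : Set S) (m : ℕ) (σ : ℕ → S) : ℝ :=
  (∑ i ∈ Finset.range (m + 1), c (σ i)) / ({i : ℕ | i ≤ m ∧ σ i ∈ M}.ncard : ℝ)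

/-- `D(u, u')`: infimum, over finite runs `u = v₀, …, v_{n+1} = u'` whose
intermediate states avoid `M`, of `Σ_{j=0}^{n} c(v_j)` (valued in `[0, ∞]`). -/
noncomputable def Dred {S : Type*} (T : S → S → Prop) (c : S → ℝ) (M : Set S)
    (u u' : S) : ℝ≥0∞ :=
  sInf {x : ℝ≥0∞ | ∃ (n : ℕ) (v : ℕ → S), v 0 = u ∧ v (n + 1) = u' ∧
    (∀ i < n + 1, T (v i) (v (i + 1))) ∧
    (∀ j, 1 ≤ j → j ≤ n → v j ∉ M) ∧
    x = ∑ j ∈ Finset.range (n + 1), ENNReal.ofReal (c (v j))}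

/-! Cut a cycle at its visits to `M`: each piece is a run between consecutive visits whose interior
avoids `M`, so its cost bounds the corresponding value of `Dred`. The visited states thus form a
cyclic sequence whose mean `Dred`-weight is at most the ratio of the cycle. Conversely, replacing
each step of a cyclic sequence in `M` by a run that is `ε`-optimal for `Dred` and concatenating
these runs gives a cycle whose ratio exceeds the mean by at most `ε`. -/

open Function

section Preliminaries

lemma eq_empty_of_lowerBounds_eq_univ {α : Type*} [Preorder α] [NoTopOrder α] {s : Set α}
    (h : lowerBounds s = Set.univ) : s = ∅ := by
  refine Set.eq_empty_of_forall_notMem fun b hb ↦ ?_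
  obtain ⟨a, ha⟩ := exists_not_le b
  exact ha ((h.symm ▸ Set.mem_univ a : a ∈ lowerBounds s) hb)

lemma csInf_eq_csInf_of_lowerBounds_eq {α : Type*} [ConditionallyCompleteLinearOrder α]
    [NoTopOrder α] {s t : Set α} (h : lowerBounds s = lowerBounds t) : sInf s = sInf t := by
  rcases s.eq_empty_or_nonempty with rfl | hs
  · rw [eq_empty_of_lowerBounds_eq_univ (h.symm.trans lowerBounds_empty)]
  rcases t.eq_empty_or_nonempty with rfl | ht
  · rw [eq_empty_of_lowerBounds_eq_univ (h.trans lowerBounds_empty)]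
  by_cases hbdd : BddBelow s
  · have hbdd' : BddBelow t := by rwa [BddBelow, ← h]
    exact (isGLB_csInf hs hbdd).unique ((isGLB_congr h).2 (isGLB_csInf ht hbdd'))
  · have hbdd' : ¬ BddBelow t := by rwa [BddBelow, ← h]
    rw [csInf_of_not_bddBelow hbdd, csInf_of_not_bddBelow hbdd']

lemma ncard_setOf_le_and_eq_count (p : ℕ → Prop) [DecidablePred p] (m : ℕ) :
    {i : ℕ | i ≤ m ∧ p i}.ncard = Nat.count p (m + 1) := by
  have : {i : ℕ | i ≤ m ∧ p i} = ((Finset.range (m + 1)).filter p : Finset ℕ) := by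
    ext i; simp
  rw [this, Set.ncard_coe_finset, Nat.count_eq_card_filter_range]

lemma count_congr_of_lt {p q : ℕ → Prop} [DecidablePred p] [DecidablePred q] {n : ℕ}
    (h : ∀ i < n, (p i ↔ q i)) : Nat.count p n = Nat.count q n :=
  le_antisymm (Nat.count_mono_left fun i hi ↦ (h i hi).1)
    (Nat.count_mono_left fun i hi ↦ (h i hi).2)

lemma count_succ_eq_one {p : ℕ → Prop} [DecidablePred p] {n : ℕ} (h0 : p 0)
    (h : ∀ j, 1 ≤ j → j ≤ n → ¬ p j) : Nat.count p (n + 1) = 1 := by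
  rw [Nat.count_succ', if_pos h0, Nat.count_iff_forall_not.2]
  exact fun j hj ↦ h (j + 1) (by lia) hj

lemma periodic_comp_mod {α : Type*} (f : ℕ → α) (n : ℕ) : Periodic (fun i ↦ f (i % n)) n := by
  intro i
  simp only [Nat.add_mod_right]

lemma sum_Ico_add_of_periodic {R : Type*} [AddCommMonoid R] {f : ℕ → R} {n : ℕ}
    (hf : Periodic f n) (a : ℕ) :
    ∑ i ∈ Finset.Ico a (a + n), f i = ∑ i ∈ Finset.range n, f i := by
  induction a with
  | zero => rw [zero_add, Finset.range_eq_Ico]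
  | succ a ih =>
    rcases n.eq_zero_or_pos with rfl | hn
    · simp
    rw [← ih, add_right_comm, Finset.sum_Ico_succ_top (by lia),
      Finset.sum_eq_sum_Ico_succ_bot (Nat.lt_add_of_pos_right hn), hf, add_comm]

lemma sum_range_sum_Ico {R : Type*} [AddCommMonoid R] (f : ℕ → R) {t : ℕ → ℕ} (ht : Monotone t)
    (k : ℕ) : ∑ i ∈ Finset.range k, ∑ j ∈ Finset.Ico (t i) (t (i + 1)), f j =
      ∑ j ∈ Finset.Ico (t 0) (t k), f j := by
  induction k with
  | zero => simp
  | succ k ih =>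
    rw [Finset.sum_range_succ, ih, Finset.sum_Ico_consecutive _ (ht k.zero_le) (ht k.le_succ)]

lemma infinite_setOf_of_periodic {p : ℕ → Prop} {n i : ℕ} (hp : Periodic p n) (hn : 0 < n)
    (hi : p i) : {j | p j}.Infinite := by
  refine Set.infinite_of_forall_exists_gt fun a ↦ ⟨i + (a + 1) * n, ?_, by nlinarith⟩
  exact (hp.nat_mul (a + 1) i).mpr hi

lemma nth_add_count_of_periodic {p : ℕ → Prop} [DecidablePred p] {n : ℕ} (hp : Periodic p n)
    (hinf : {j | p j}.Infinite) (i : ℕ) :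
    Nat.nth p (i + Nat.count p n) = Nat.nth p i + n := by
  have hmem : p (Nat.nth p i + n) := (hp _).mpr (Nat.nth_mem_of_infinite hinf i)
  have hcount : Nat.count p (Nat.nth p i + n) = i + Nat.count p n := by
    rw [Nat.count_add', count_congr_of_lt fun j _ ↦ (hp j).to_iff,
      Nat.count_nth_of_infinite hinf]
  rw [← hcount, Nat.nth_count hmem]

end Preliminaries

section Surveillance

variable {S : Type*}

section Runs

/-- A finite run of `n` transitions from `s` to `s'`, encoded as in `IsCycle` by a sequence of
which only the entries `σ 0, …, σ n` matter. -/
structure IsRun (T : S → S → Prop) (n : ℕ) (σ : ℕ → S) (s s' : S) : Prop where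
  source : σ 0 = s
  target : σ n = s'
  step : ∀ i < n, T (σ i) (σ (i + 1))

/-- Concatenation of runs: `σ 0, …, σ (n - 1), τ 0, τ 1, …`. The state `σ n` is dropped, since it
is `τ 0` whenever the runs are composable. -/
def splice (n : ℕ) (σ τ : ℕ → S) (i : ℕ) : S :=
  if i < n then σ i else τ (i - n)

variable {T : S → S → Prop} {m n : ℕ} {σ τ : ℕ → S} {s s' s'' : S}

lemma splice_of_lt {i : ℕ} (hi : i < n) : splice n σ τ i = σ i := if_pos hi

lemma splice_add (i : ℕ) : splice n σ τ (n + i) = τ i := by simp [splice]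

lemma splice_of_le (h : σ n = τ 0) {i : ℕ} (hi : i ≤ n) : splice n σ τ i = σ i := by
  rcases hi.lt_or_eq with hi | rfl
  · exact splice_of_lt hi
  · exact (splice_add 0).trans h.symm

lemma IsRun.splice (hσ : IsRun T m σ s s') (hτ : IsRun T n τ s' s'') :
    IsRun T (m + n) (splice m σ τ) s s'' := by
  have hjoin : σ m = τ 0 := hσ.target.trans hτ.source.symm
  refine ⟨(splice_of_le hjoin m.zero_le).trans hσ.source, (splice_add n).trans hτ.target, ?_⟩
  intro i hi
  rcases lt_or_ge i m with him | hmi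
  · rw [splice_of_lt him, splice_of_le hjoin him]
    exact hσ.step i him
  · obtain ⟨j, rfl⟩ := Nat.exists_eq_add_of_le hmi
    rw [add_assoc, splice_add, splice_add]
    exact hτ.step j (by lia)

lemma sum_range_splice {R : Type*} [AddCommMonoid R] (f : S → R) (m n : ℕ) (σ τ : ℕ → S) :
    ∑ i ∈ Finset.range (m + n), f (splice m σ τ i) =
      ∑ i ∈ Finset.range m, f (σ i) + ∑ i ∈ Finset.range n, f (τ i) := by
  rw [Finset.sum_range_add]
  simp only [splice_add]
  congr 1
  exact Finset.sum_congr rfl fun i hi ↦ by rw [splice_of_lt (Finset.mem_range.1 hi)]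

lemma count_splice (p : S → Prop) [DecidablePred p] (m n : ℕ) (σ τ : ℕ → S) :
    Nat.count (fun i ↦ p (splice m σ τ i)) (m + n) =
      Nat.count (fun i ↦ p (σ i)) m + Nat.count (fun i ↦ p (τ i)) n := by
  rw [Nat.count_add]
  simp only [splice_add]
  congr 1
  exact count_congr_of_lt fun i hi ↦ by rw [splice_of_lt hi]

lemma IsRun.isCycle (hσ : IsRun T (n + 1) σ s s) : IsCycle T n σ := by
  refine ⟨fun i hi ↦ hσ.step i (by lia), ?_⟩
  rw [hσ.source, ← hσ.target]
  exact hσ.step n n.lt_succ_self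

lemma IsCycle.step_mod (hσ : IsCycle T m σ) (i : ℕ) :
    T (σ (i % (m + 1))) (σ ((i + 1) % (m + 1))) := by
  rw [← Nat.mod_add_mod]
  rcases (Nat.le_of_lt_succ (Nat.mod_lt i m.succ_pos)).lt_or_eq with hlt | heq
  · rw [Nat.mod_eq_of_lt (Nat.succ_lt_succ hlt)]
    exact hσ.1 _ hlt
  · rw [heq, Nat.mod_self]
    exact hσ.2

end Runs

variable {T : S → S → Prop} {c : S → ℝ} {M : Set S}

section ReducedDistance

lemma Dred_le_ofReal_sum_Ico (hc : ∀ s, 0 ≤ c s) {τ : ℕ → S} {a b : ℕ} (hab : a < b)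
    (hτ : ∀ i, a ≤ i → i < b → T (τ i) (τ (i + 1))) (havoid : ∀ i, a < i → i < b → τ i ∉ M) :
    Dred T c M (τ a) (τ b) ≤ ENNReal.ofReal (∑ i ∈ Finset.Ico a b, c (τ i)) := by
  obtain ⟨n, rfl⟩ := Nat.exists_eq_add_of_lt hab
  rw [Finset.sum_Ico_eq_sum_range, ENNReal.ofReal_sum_of_nonneg fun _ _ ↦ hc _,
    show a + n + 1 - a = n + 1 by lia]
  exact sInf_le ⟨n, fun j ↦ τ (a + j), rfl, rfl, fun i _ ↦ hτ _ (by lia) (by lia),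
    fun j _ _ ↦ havoid _ (by lia) (by lia), rfl⟩

lemma exists_run_sum_le_Dred_add (hc : ∀ s, 0 ≤ c s) {u u' : S} (hD : Dred T c M u u' ≠ ⊤)
    {ε : ℝ} (hε : 0 < ε) :
    ∃ (n : ℕ) (v : ℕ → S), IsRun T (n + 1) v u u' ∧ (∀ j, 1 ≤ j → j ≤ n → v j ∉ M) ∧
      ∑ j ∈ Finset.range (n + 1), c (v j) ≤ (Dred T c M u u').toReal + ε := by
  have hlt : Dred T c M u u' < Dred T c M u u' + ENNReal.ofReal ε :=
    ENNReal.lt_add_right hD (by simpa using hε)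
  obtain ⟨_, ⟨n, v, hv0, hvn, hstep, havoid, rfl⟩, hv⟩ := sInf_lt_iff.1 hlt
  refine ⟨n, v, ⟨hv0, hvn, hstep⟩, havoid, ?_⟩
  rw [← ENNReal.ofReal_sum_of_nonneg fun _ _ ↦ hc _, ← ENNReal.ofReal_toReal hD,
    ← ENNReal.ofReal_add ENNReal.toReal_nonneg hε.le] at hv
  exact (ENNReal.ofReal_le_ofReal_iff (by positivity)).1 hv.le

open Classical in
lemma exists_run_through (hc : ∀ s, 0 ≤ c s) {u : ℕ → S} (hu : ∀ i, u i ∈ M)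
    (hD : ∀ i, Dred T c M (u i) (u (i + 1)) ≠ ⊤) {ε : ℝ} (hε : 0 < ε) (k : ℕ) :
    ∃ (n : ℕ) (τ : ℕ → S), IsRun T n τ (u 0) (u k) ∧ Nat.count (fun i ↦ τ i ∈ M) n = k ∧
      ∑ i ∈ Finset.range n, c (τ i) ≤
        ∑ i ∈ Finset.range k, ((Dred T c M (u i) (u (i + 1))).toReal + ε) := by
  induction k with
  | zero => exact ⟨0, u, ⟨rfl, rfl, by simp⟩, by simp, by simp⟩
  | succ k ih =>
    obtain ⟨n, τ, hτ, hcount, hsum⟩ := ih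
    obtain ⟨l, v, hv, havoid, hcost⟩ := exists_run_sum_le_Dred_add hc (hD k) hε
    refine ⟨n + (l + 1), splice n τ v, hτ.splice hv, ?_, ?_⟩
    · rw [count_splice (· ∈ M), hcount, count_succ_eq_one (hv.source ▸ hu k) havoid]
    · rw [sum_range_splice, Finset.sum_range_succ _ k]
      exact add_le_add hsum hcost

end ReducedDistance

section Ratios

/-- The per-surveillance-cycle ratios of the cycles of `(S, T)` that visit `M`. -/
def surveillanceRatios (T : S → S → Prop) (c : S → ℝ) (M : Set S) : Set ℝ :=
  {γ : ℝ | ∃ (m : ℕ) (σ : ℕ → S), IsCycle T m σ ∧ (∃ i ≤ m, σ i ∈ M) ∧ γ = psRatio c M m σ}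

/-- The mean weights of the cycles of the reduced graph, whose states are those of `M` and whose
edges are the pairs at finite distance `Dred`, weighted by that distance. -/
def reducedMeans (T : S → S → Prop) (c : S → ℝ) (M : Set S) : Set ℝ :=
  {γ : ℝ | ∃ (m : ℕ) (u : ℕ → S), (∀ i ≤ m, u i ∈ M) ∧
    (∀ i ≤ m, Dred T c M (u i) (u ((i + 1) % (m + 1))) ≠ ⊤) ∧
    γ = (∑ i ∈ Finset.range (m + 1),
      (Dred T c M (u i) (u ((i + 1) % (m + 1)))).toReal) / (m + 1)}

open Classical in
lemma psRatio_eq_sum_div_count (c : S → ℝ) (M : Set S) (m : ℕ) (σ : ℕ → S) :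
    psRatio c M m σ =
      (∑ i ∈ Finset.range (m + 1), c (σ i)) / Nat.count (fun i ↦ σ i ∈ M) (m + 1) := by
  rw [psRatio, ncard_setOf_le_and_eq_count]

open Classical in
lemma exists_periodic_of_mem_surveillanceRatios {γ : ℝ} (hγ : γ ∈ surveillanceRatios T c M) :
    ∃ (n : ℕ) (τ : ℕ → S), Periodic τ n ∧ (∀ i, T (τ i) (τ (i + 1))) ∧ (∃ i < n, τ i ∈ M) ∧
      γ = (∑ i ∈ Finset.range n, c (τ i)) / Nat.count (fun i ↦ τ i ∈ M) n := by
  obtain ⟨m, σ, hσ, ⟨i, him, hi⟩, rfl⟩ := hγ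
  set τ : ℕ → S := fun j ↦ σ (j % (m + 1))
  have hτσ (j : ℕ) (hj : j < m + 1) : τ j = σ j := congrArg σ (Nat.mod_eq_of_lt hj)
  refine ⟨m + 1, τ, periodic_comp_mod σ _, hσ.step_mod, ⟨i, Nat.lt_succ_of_le him, ?_⟩, ?_⟩
  · rwa [hτσ i (Nat.lt_succ_of_le him)]
  · rw [psRatio_eq_sum_div_count,
      Finset.sum_congr rfl fun j hj ↦ congrArg c (hτσ j (Finset.mem_range.1 hj)),
      count_congr_of_lt fun j hj ↦ iff_of_eq (congrArg (· ∈ M) (hτσ j hj))]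

open Classical in
lemma sum_div_count_mem_surveillanceRatios {n : ℕ} {τ : ℕ → S} {s : S}
    (hτ : IsRun T n τ s s) (hcount : Nat.count (fun i ↦ τ i ∈ M) n ≠ 0) :
    (∑ i ∈ Finset.range n, c (τ i)) / Nat.count (fun i ↦ τ i ∈ M) n ∈
      surveillanceRatios T c M := by
  obtain ⟨i, hin, hi⟩ := Nat.count_ne_iff_exists.1 hcount
  obtain ⟨m, rfl⟩ := Nat.exists_eq_add_one_of_ne_zero (Nat.ne_zero_of_lt hin)
  exact ⟨m, τ, hτ.isCycle, ⟨i, Nat.le_of_lt_succ hin, hi⟩,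
    (psRatio_eq_sum_div_count c M m τ).symm⟩

lemma mem_reducedMeans_iff_exists_periodic {γ : ℝ} :
    γ ∈ reducedMeans T c M ↔ ∃ (k : ℕ) (u : ℕ → S), k ≠ 0 ∧ Periodic u k ∧ (∀ i, u i ∈ M) ∧
      (∀ i, Dred T c M (u i) (u (i + 1)) ≠ ⊤) ∧
      γ = (∑ i ∈ Finset.range k, (Dred T c M (u i) (u (i + 1))).toReal) / k := by
  constructor
  · rintro ⟨m, u, hu, hD, rfl⟩
    have hle (i : ℕ) : i % (m + 1) ≤ m := Nat.le_of_lt_succ (Nat.mod_lt i m.succ_pos)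
    refine ⟨m + 1, fun i ↦ u (i % (m + 1)), m.succ_ne_zero, periodic_comp_mod u _,
      fun i ↦ hu _ (hle i), fun i ↦ by simpa only [Nat.mod_add_mod] using hD _ (hle i), ?_⟩
    push_cast
    congr 1
    exact Finset.sum_congr rfl fun i hi ↦ by rw [Nat.mod_eq_of_lt (Finset.mem_range.1 hi)]
  · rintro ⟨k, u, hk, hper, hu, hD, rfl⟩
    obtain ⟨m, rfl⟩ := Nat.exists_eq_add_one_of_ne_zero hk
    refine ⟨m, u, fun i _ ↦ hu i, fun i _ ↦ ?_, ?_⟩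
    · rw [hper.map_mod_nat]
      exact hD i
    · simp only [hper.map_mod_nat, Nat.cast_add, Nat.cast_one]

end Ratios

section Comparison

lemma exists_mem_reducedMeans_le (hc : ∀ s, 0 ≤ c s) {γ : ℝ}
    (hγ : γ ∈ surveillanceRatios T c M) : ∃ δ ∈ reducedMeans T c M, δ ≤ γ := by
  classical
  obtain ⟨n, τ, hper, hτ, ⟨i₀, hi₀n, hi₀⟩, rfl⟩ := exists_periodic_of_mem_surveillanceRatios hγ
  set p : ℕ → Prop := fun i ↦ τ i ∈ M
  set k := Nat.count p n
  set t := Nat.nth p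
  have hpper : Periodic p n := hper.comp (· ∈ M)
  have hinf : {i | p i}.Infinite := infinite_setOf_of_periodic hpper (by lia) hi₀
  have ht_add (i : ℕ) : t (i + k) = t i + n := nth_add_count_of_periodic hpper hinf i
  have hD (i : ℕ) : Dred T c M (τ (t i)) (τ (t (i + 1))) ≤
      ENNReal.ofReal (∑ j ∈ Finset.Ico (t i) (t (i + 1)), c (τ j)) :=
    Dred_le_ofReal_sum_Ico hc (Nat.nth_strictMono hinf i.lt_succ_self) (fun j _ _ ↦ hτ j)
      fun j hij hji hj ↦ hij.not_ge (Nat.le_nth_of_lt_nth_succ hji hj)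
  refine ⟨_, mem_reducedMeans_iff_exists_periodic.2 ⟨k, τ ∘ t,
    Nat.count_ne_iff_exists.2 ⟨i₀, hi₀n, hi₀⟩, fun i ↦ ?_, Nat.nth_mem_of_infinite hinf,
    fun i ↦ ne_top_of_le_ne_top ENNReal.ofReal_ne_top (hD i), rfl⟩, ?_⟩
  · rw [comp_apply, ht_add, hper, comp_apply]
  gcongr ?_ / _
  calc ∑ i ∈ Finset.range k, (Dred T c M (τ (t i)) (τ (t (i + 1)))).toReal
      ≤ ∑ i ∈ Finset.range k, ∑ j ∈ Finset.Ico (t i) (t (i + 1)), c (τ j) :=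
        Finset.sum_le_sum fun i _ ↦
          ENNReal.toReal_le_of_le_ofReal (Finset.sum_nonneg fun _ _ ↦ hc _) (hD i)
    _ = ∑ j ∈ Finset.Ico (t 0) (t k), c (τ j) :=
        sum_range_sum_Ico _ (Nat.nth_monotone hinf) k
    _ = ∑ j ∈ Finset.range n, c (τ j) := by
        rw [← zero_add k, ht_add]
        exact sum_Ico_add_of_periodic (hper.comp c) (t 0)

lemma exists_mem_surveillanceRatios_le_add (hc : ∀ s, 0 ≤ c s) {δ : ℝ}
    (hδ : δ ∈ reducedMeans T c M) {ε : ℝ} (hε : 0 < ε) :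
    ∃ γ ∈ surveillanceRatios T c M, γ ≤ δ + ε := by
  classical
  obtain ⟨k, u, hk, hper, hu, hD, rfl⟩ := mem_reducedMeans_iff_exists_periodic.1 hδ
  obtain ⟨n, τ, hτ, hcount, hsum⟩ := exists_run_through hc hu hD hε k
  rw [hper.eq] at hτ
  refine ⟨_, sum_div_count_mem_surveillanceRatios hτ (hcount ▸ hk), ?_⟩
  have hk' : (k : ℝ) ≠ 0 := Nat.cast_ne_zero.2 hk
  calc (∑ i ∈ Finset.range n, c (τ i)) / (Nat.count (fun i ↦ τ i ∈ M) n : ℝ)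
      ≤ (∑ i ∈ Finset.range k, ((Dred T c M (u i) (u (i + 1))).toReal + ε)) / k := by
        rw [hcount]
        gcongr
    _ = (∑ i ∈ Finset.range k, (Dred T c M (u i) (u (i + 1))).toReal) / k + ε := by
        rw [Finset.sum_add_distrib, Finset.sum_const, Finset.card_range, nsmul_eq_mul]
        field_simp

end Comparison

/-- Stated through lower bounds since in `ℝ` the infimum of the empty set is the junk value `0`. -/
theorem stmt_11_general (T : S → S → Prop) {c : S → ℝ} (hc : ∀ s, 0 ≤ c s) (M : Set S) :
    lowerBounds (surveillanceRatios T c M) = lowerBounds (reducedMeans T c M) := by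
  ext x
  constructor
  · refine fun hx δ hδ ↦ le_of_forall_pos_le_add fun ε hε ↦ ?_
    obtain ⟨γ, hγ, hle⟩ := exists_mem_surveillanceRatios_le_add hc hδ hε
    exact (hx hγ).trans hle
  · intro hx γ hγ
    obtain ⟨δ, hδ, hle⟩ := exists_mem_reducedMeans_le hc hγ
    exact (hx hδ).trans hle

end Surveillance

/-- In a strongly connected graph, the minimum per-surveillance-cycle
ratio over cycles visiting `M` equals the minimum mean `D`-weight over cyclic
sequences of states of `M` with finite pairwise `D`-values. -/
theorem stmt_11 {S : Type*} [Fintype S] [Nonempty S] (T : S → S → Prop)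
    (hconn : ∀ s s' : S, ∃ (n : ℕ) (σ : ℕ → S), σ 0 = s ∧ σ n = s' ∧
      ∀ i < n, T (σ i) (σ (i + 1)))
    (c : S → ℝ) (hc : ∀ s, 0 ≤ c s) (M : Set S) (hM : M.Nonempty) :
    sInf {γ : ℝ | ∃ (m : ℕ) (σ : ℕ → S), IsCycle T m σ ∧ (∃ i ≤ m, σ i ∈ M) ∧
        γ = psRatio c M m σ} =
    sInf {γ : ℝ | ∃ (m : ℕ) (u : ℕ → S), (∀ i ≤ m, u i ∈ M) ∧
        (∀ i ≤ m, Dred T c M (u i) (u ((i + 1) % (m + 1))) ≠ ⊤) ∧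
        γ = (∑ i ∈ Finset.range (m + 1),
          (Dred T c M (u i) (u ((i + 1) % (m + 1)))).toReal) / (m + 1)} := by
  exact csInf_eq_csInf_of_lowerBounds_eq (stmt_11_general T hc M)
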